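/- Let n be a positive integer, q ≥ 0, p ≥ 0, and let q̂ = X/n where X ~ Poisson(nq). Then |E|q̂ − p| − |q − p|| ≤ 2·min{p, q, √(p/n), √(q/n)}. Moreover, sup_{q ≥ 0} |E|q̂ − p| − |q − p|| ≥ (1/√2)·min{p, √(p/n)} (the supremum being over all choices of the Poisson mean parameter q, with q̂ = X/n, X ~ Poisson(nq)). -/

import Mathlib

open scoped BigOperators

/-- The Poisson(lam) probability mass function on the nonnegative integers. -/
noncomputable def poissonPMF (lam : ℝ) (k : ℕ) : ℝ :=
  Real.exp (-lam) * lam ^ k / (Nat.factorial k)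

/-- Expectation of `f` under the Poisson(lam) distribution. -/
noncomputable def poissonE (lam : ℝ) (f : ℕ → ℝ) : ℝ :=
  ∑' k : ℕ, poissonPMF lam k * f k

/-!
The excess `E|X - p| - |E X - p|` is nonnegative by Jensen. The upper bounds hold for every
nonnegative random variable with `Var X ≤ c E X` (here `c = 1 / n`): the triangle inequality gives
`2 min (p, E X)`, which together with `E|X - p| ≤ √(Var X + (E X - p)²)` gives both square-root
bounds.

For the lower bound take `q = p`, so that the bias is a mean absolute deviation. With
`X ~ Poisson(r)` and `m` arbitrary, the Stein–Chen identity `E[X f(X)] = r E[f(X + 1)]` for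
`f = 1_{· ≤ m}` gives `E[(r - X) 1_{X ≤ m}] = r P(X = m)`, and since `X - r` has mean zero,
`E|X - r| ≥ 2 r P(X = m)`. Taking `m = 0` for `r ≤ 1` and `m = ⌊r⌋` with Stirling's bound for
`r ≥ 1` yields `E|X - r| ≥ (2 / e) min (r, √r)`, and `2 / e ≥ 1 / √2`.
-/

open MeasureTheory Real Set
open ProbabilityTheory hiding poissonPMF
open scoped NNReal Nat

section AbsBias

variable {Ω : Type*} {mΩ : MeasurableSpace Ω} {μ : Measure Ω} {X : Ω → ℝ}

lemma two_mul_norm_setIntegral_le_integral_norm {E : Type*} [NormedAddCommGroup E]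
    [NormedSpace ℝ E] {Y : Ω → E} {s : Set Ω} (hY : Integrable Y μ) (hY0 : ∫ ω, Y ω ∂μ = 0)
    (hs : MeasurableSet s) : 2 * ‖∫ ω in s, Y ω ∂μ‖ ≤ ∫ ω, ‖Y ω‖ ∂μ := by
  have hcompl : ‖∫ ω in sᶜ, Y ω ∂μ‖ = ‖∫ ω in s, Y ω ∂μ‖ := by
    rw [setIntegral_compl hs hY, hY0, zero_sub, norm_neg]
  calc 2 * ‖∫ ω in s, Y ω ∂μ‖ = ‖∫ ω in s, Y ω ∂μ‖ + ‖∫ ω in sᶜ, Y ω ∂μ‖ := by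
        rw [hcompl, two_mul]
    _ ≤ ∫ ω in s, ‖Y ω‖ ∂μ + ∫ ω in sᶜ, ‖Y ω‖ ∂μ :=
        add_le_add (norm_integral_le_integral_norm _) (norm_integral_le_integral_norm _)
    _ = ∫ ω, ‖Y ω‖ ∂μ := integral_add_compl hs hY.norm

/-- The bias `E|X - p| - |E X - p|` of `|X - p|` as an estimator of the distance from `E X` to `p`,
for a random variable `X` under the measure `μ`. -/
noncomputable def absBias (X : Ω → ℝ) (p : ℝ) (μ : Measure Ω) : ℝ :=
  ∫ ω, |X ω - p| ∂μ - |μ[X] - p|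

variable [IsProbabilityMeasure μ]

lemma integral_sub_const_eq (hX : Integrable X μ) (p : ℝ) : ∫ ω, (X ω - p) ∂μ = μ[X] - p := by
  simp [integral_sub hX (integrable_const p)]

lemma absBias_nonneg (hX : Integrable X μ) (p : ℝ) : 0 ≤ absBias X p μ := by
  rw [absBias, sub_nonneg, ← integral_sub_const_eq hX]
  exact abs_integral_le_integral_abs

lemma absBias_le_two_mul_min {p : ℝ} (hX : Integrable X μ) (hX0 : 0 ≤ᵐ[μ] X) (hp : 0 ≤ p) :
    absBias X p μ ≤ 2 * min p μ[X] := by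
  have hle : ∫ ω, |X ω - p| ∂μ ≤ μ[X] + p := by
    calc ∫ ω, |X ω - p| ∂μ ≤ ∫ ω, (X ω + p) ∂μ := by
          refine integral_mono_ae (hX.sub (integrable_const p)).abs
            (hX.add (integrable_const p)) ?_
          filter_upwards [hX0] with ω hω
          exact (abs_sub _ _).trans_eq (by rw [abs_of_nonneg hω, abs_of_nonneg hp])
      _ = μ[X] + p := by simp [integral_add hX (integrable_const p)]
  have hmin : 2 * min p μ[X] = p + μ[X] - |μ[X] - p| := by
    simpa using two_nsmul_inf_eq_add_sub_abs_sub p μ[X]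
  rw [absBias, hmin, add_comm p]
  exact sub_le_sub_right hle _

lemma integral_abs_le_sqrt_integral_sq (hX : MemLp X 2 μ) :
    ∫ ω, |X ω| ∂μ ≤ √(∫ ω, X ω ^ 2 ∂μ) := by
  have hvar := variance_nonneg |X| μ
  rw [variance_eq_sub hX.abs] at hvar
  refine le_sqrt_of_sq_le ?_
  simpa using hvar

lemma integral_sub_const_sq (hX : MemLp X 2 μ) (p : ℝ) :
    ∫ ω, (X ω - p) ^ 2 ∂μ = Var[X; μ] + (μ[X] - p) ^ 2 := by
  have hvar := variance_eq_sub (hX.sub (memLp_const p))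
  rw [← variance_sub_const hX.aestronglyMeasurable p,
    ← integral_sub_const_eq (hX.integrable one_le_two) p]
  exact sub_eq_iff_eq_add.1 hvar.symm

lemma absBias_le_sqrt_sub (hX : MemLp X 2 μ) (p : ℝ) :
    absBias X p μ ≤ √(Var[X; μ] + (μ[X] - p) ^ 2) - |μ[X] - p| := by
  rw [← integral_sub_const_sq hX]
  exact sub_le_sub_right (integral_abs_le_sqrt_integral_sq (hX.sub (memLp_const p))) _

lemma absBias_le_sqrt_variance (hX : MemLp X 2 μ) (p : ℝ) : absBias X p μ ≤ √Var[X; μ] := by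
  refine (absBias_le_sqrt_sub hX p).trans (sub_le_iff_le_add.2 ?_)
  have hsq : √Var[X; μ] ^ 2 = Var[X; μ] := sq_sqrt (variance_nonneg X μ)
  rw [sqrt_le_left (by positivity), add_sq, sq_abs, hsq]
  exact add_le_add_left (le_add_of_nonneg_right (by positivity)) _

lemma absBias_le_sqrt_mul {c p : ℝ} (hX : MemLp X 2 μ) (hX0 : 0 ≤ᵐ[μ] X)
    (hvar : Var[X; μ] ≤ c * μ[X]) (hc : 0 ≤ c) (hp : 0 ≤ p) : absBias X p μ ≤ √(c * p) := by
  rcases le_total μ[X] p with hXp | hpX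
  · refine (absBias_le_sqrt_variance hX p).trans (sqrt_le_sqrt (hvar.trans ?_))
    gcongr
  -- For `p ≤ E X` the second-moment bound suffices when `c ≤ 2√(cp)`, that is `c ≤ 4p`;
  -- when `4p ≤ c` the trivial bound `2p` is already at most `√(cp)`.
  rcases le_total (4 * p) c with hpc | hcp
  · refine (absBias_le_two_mul_min (hX.integrable one_le_two) hX0 hp).trans ?_
    rw [min_eq_left hpX]
    exact le_sqrt_of_sq_le (by nlinarith)
  · have hc_le : c ≤ 2 * √(c * p) := by
      rw [← div_le_iff₀' two_pos]
      exact le_sqrt_of_sq_le (by nlinarith)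
    have hsq : √(c * p) ^ 2 = c * p := sq_sqrt (by positivity)
    have hd : 0 ≤ μ[X] - p := sub_nonneg.2 hpX
    refine (absBias_le_sqrt_sub hX p).trans ?_
    rw [abs_of_nonneg hd, sub_le_iff_le_add, sqrt_le_left (by positivity)]
    calc Var[X; μ] + (μ[X] - p) ^ 2 ≤ c * μ[X] + (μ[X] - p) ^ 2 := by gcongr
      _ = c * p + c * (μ[X] - p) + (μ[X] - p) ^ 2 := by ring
      _ ≤ √(c * p) ^ 2 + 2 * √(c * p) * (μ[X] - p) + (μ[X] - p) ^ 2 := by rw [hsq]; gcongr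
      _ = (√(c * p) + (μ[X] - p)) ^ 2 := (add_sq _ _).symm

theorem absBias_le_min {c p : ℝ} (hX : MemLp X 2 μ) (hX0 : 0 ≤ᵐ[μ] X)
    (hvar : Var[X; μ] ≤ c * μ[X]) (hc : 0 ≤ c) (hp : 0 ≤ p) :
    absBias X p μ ≤ min (2 * min p μ[X]) (min √(c * p) √(c * μ[X])) :=
  le_min (absBias_le_two_mul_min (hX.integrable one_le_two) hX0 hp)
    (le_min (absBias_le_sqrt_mul hX hX0 hvar hc hp)
      ((absBias_le_sqrt_variance hX p).trans (sqrt_le_sqrt hvar)))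

end AbsBias

section PoissonMoments

variable (r : ℝ≥0)

lemma poissonE_eq_integral (f : ℕ → ℝ) : poissonE r f = ∫ k, f k ∂Po(r) :=
  (integral_poissonMeasure r f).symm

lemma poissonPMF_succ_mul (lam : ℝ) (k : ℕ) :
    poissonPMF lam (k + 1) * (k + 1 : ℕ) = lam * poissonPMF lam k := by
  simp only [poissonPMF, Nat.factorial_succ]
  push_cast
  field

lemma integrable_natCast_mul_poissonMeasure {r : ℝ≥0} {f : ℕ → ℝ}
    (hf : Integrable (fun k ↦ f (k + 1)) Po(r)) : Integrable (fun k ↦ k * f k) Po(r) := by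
  rw [integrable_poissonMeasure_iff] at hf ⊢
  refine (summable_nat_add_iff 1).1 ((hf.mul_left (r : ℝ)).congr fun k ↦ ?_)
  have h := poissonPMF_succ_mul r k
  simp only [poissonPMF] at h
  rw [norm_mul, norm_natCast, ← mul_assoc, ← mul_assoc, h]

lemma integral_natCast_mul_poissonMeasure (f : ℕ → ℝ) :
    ∫ k, k * f k ∂Po(r) = r * ∫ k, f (k + 1) ∂Po(r) := by
  rw [← poissonE_eq_integral, ← poissonE_eq_integral, poissonE, poissonE, ← tsum_mul_left,
    ← (add_left_injective 1).tsum_eq]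
  · refine tsum_congr fun k ↦ ?_
    rw [← mul_assoc, poissonPMF_succ_mul, mul_assoc]
  · intro k hk
    exact ⟨k - 1, Nat.sub_add_cancel (Nat.pos_of_ne_zero fun h ↦ hk (by simp [h]))⟩

lemma integrable_natCast_poissonMeasure : Integrable (fun k : ℕ ↦ (k : ℝ)) Po(r) := by
  simpa using integrable_natCast_mul_poissonMeasure (r := r) (f := fun _ ↦ 1) (integrable_const 1)

lemma integral_natCast_poissonMeasure : ∫ k, (k : ℝ) ∂Po(r) = r := by
  simpa using integral_natCast_mul_poissonMeasure r 1

lemma memLp_two_natCast_poissonMeasure : MemLp (fun k : ℕ ↦ (k : ℝ)) 2 Po(r) := by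
  have hshift : Integrable (fun k : ℕ ↦ ((k + 1 : ℕ) : ℝ)) Po(r) := by
    simpa using (integrable_natCast_poissonMeasure r).add (integrable_const 1)
  have hmul : Integrable (fun k : ℕ ↦ (k : ℝ) * k) Po(r) :=
    integrable_natCast_mul_poissonMeasure hshift
  rw [memLp_two_iff_integrable_sq .of_discrete]
  exact hmul.congr (.of_forall fun k ↦ (sq (k : ℝ)).symm)

lemma variance_natCast_poissonMeasure : Var[fun k : ℕ ↦ (k : ℝ); Po(r)] = r := by
  have hsq : ∫ k, (k : ℝ) ^ 2 ∂Po(r) = r * (r + 1) := by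
    simp_rw [sq, integral_natCast_mul_poissonMeasure, Nat.cast_add_one]
    rw [integral_add (integrable_natCast_poissonMeasure r) (integrable_const 1),
      integral_natCast_poissonMeasure]
    simp
  rw [variance_eq_sub (memLp_two_natCast_poissonMeasure r), integral_natCast_poissonMeasure]
  simp only [Pi.pow_apply, hsq]
  ring

lemma setIntegral_Iic_natCast_sub_poissonMeasure (m : ℕ) :
    ∫ k in Iic m, ((k : ℝ) - r) ∂Po(r) = -(r * Po(r).real {m}) := by
  have hmean : ∫ k in Iic m, (k : ℝ) ∂Po(r) = r * Po(r).real (Iio m) := by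
    have h := integral_natCast_mul_poissonMeasure r ((Iic m).indicator 1)
    have hshift : (fun k : ℕ ↦ (Iic m).indicator (1 : ℕ → ℝ) (k + 1)) = (Iio m).indicator 1 := by
      ext k
      simp [indicator]
    rw [hshift, integral_indicator_one measurableSet_Iio] at h
    rw [← h, ← integral_indicator measurableSet_Iic]
    simp [indicator]
  have hIic : Po(r).real (Iic m) = Po(r).real (Iio m) + Po(r).real {m} := by
    rw [← Iio_union_right, measureReal_union (by simp) (measurableSet_singleton m)]
  rw [integral_sub (integrable_natCast_poissonMeasure r).integrableOn (integrable_const _), hmean,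
    setIntegral_const, hIic, smul_eq_mul]
  ring

theorem two_mul_mul_poissonMeasure_singleton_le_integral_abs_sub (m : ℕ) :
    2 * (r * Po(r).real {m}) ≤ ∫ k, |(k : ℝ) - r| ∂Po(r) := by
  have hint : Integrable (fun k : ℕ ↦ (k : ℝ) - r) Po(r) :=
    (integrable_natCast_poissonMeasure r).sub (integrable_const _)
  have hzero : ∫ k, ((k : ℝ) - r) ∂Po(r) = 0 := by
    rw [integral_sub_const_eq (integrable_natCast_poissonMeasure r),
      integral_natCast_poissonMeasure, sub_self]
  have h := two_mul_norm_setIntegral_le_integral_norm hint hzero (measurableSet_Iic (a := m))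
  rwa [setIntegral_Iic_natCast_sub_poissonMeasure, norm_neg,
    norm_of_nonneg (by positivity)] at h

end PoissonMoments

section Stirling

lemma log_factorial_le {m : ℕ} (hm : m ≠ 0) : log m ! ≤ (m + 1 / 2) * log m - m + 1 := by
  obtain ⟨j, rfl⟩ := Nat.exists_eq_succ_of_ne_zero hm
  have hj : ((j + 1 : ℕ) : ℝ) ≠ 0 := by positivity
  have h : log (Stirling.stirlingSeq (j + 1)) ≤ log (Stirling.stirlingSeq 1) :=
    Stirling.log_stirlingSeq'_antitone j.zero_le
  rw [Stirling.log_stirlingSeq_formula, Stirling.stirlingSeq_one, log_mul two_ne_zero hj,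
    log_div hj (exp_ne_zero 1), log_div (exp_ne_zero 1) (by positivity), log_exp,
    log_sqrt zero_le_two] at h
  linarith

lemma log_factorial_le_of_mem_Icc {m : ℕ} {x : ℝ} (hm : m ≠ 0) (hx : x ∈ Icc (m : ℝ) (m + 1)) :
    log m ! ≤ (m + 1 / 2) * log x - x + 1 := by
  have hm0 : (0 : ℝ) < m := by positivity
  have hconc : ConcaveOn ℝ (Ioi 0) fun y ↦ (m + 1 / 2) * log y - y :=
    (strictConcaveOn_log_Ioi.concaveOn.smul (by positivity)).sub (convexOn_id (convex_Ioi 0))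
  -- On an interval a concave function is minimal at an endpoint,
  -- and at `m + 1` the claim is Stirling's bound for `(m + 1)!`.
  have hmin := hconc.min_le_of_mem_Icc hm0 (by positivity : (0 : ℝ) < m + 1) hx
  have hsucc := log_factorial_le m.succ_ne_zero
  rw [Nat.factorial_succ] at hsucc
  push_cast at hsucc
  rw [log_mul (by positivity) (by positivity)] at hsucc
  have hends := le_min (sub_le_iff_le_add.2 (log_factorial_le hm))
    (by linarith : log m ! - 1 ≤ (m + 1 / 2) * log (m + 1) - (m + 1))
  exact sub_le_iff_le_add.1 (hends.trans hmin)

end Stirling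

section PoissonMeanAbsDeviation

lemma exp_neg_one_mul_sqrt_le_mul_poissonMeasure_floor {r : ℝ≥0} (hr : 1 ≤ r) :
    exp (-1) * √r ≤ r * Po(r).real {⌊(r : ℝ)⌋₊} := by
  set m := ⌊(r : ℝ)⌋₊
  have hr0 : (0 : ℝ) < r := by positivity
  have hm : m ≠ 0 := (Nat.floor_pos.2 hr).ne'
  have hlog := log_factorial_le_of_mem_Icc hm
    ⟨Nat.floor_le hr0.le, (Nat.lt_floor_add_one (r : ℝ)).le⟩
  rw [poissonMeasure_real_singleton, ← log_le_log_iff (by positivity) (by positivity),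
    log_mul (by positivity) (by positivity), log_exp, log_sqrt hr0.le,
    log_mul (by positivity) (by positivity), log_div (by positivity) (by positivity),
    log_mul (by positivity) (by positivity), log_exp, log_pow]
  linarith

theorem two_mul_exp_neg_one_mul_min_le_integral_abs_sub_poissonMeasure (r : ℝ≥0) :
    2 * exp (-1) * min (r : ℝ) √r ≤ ∫ k, |(k : ℝ) - r| ∂Po(r) := by
  have hbound : ∃ m : ℕ, exp (-1) * min (r : ℝ) √r ≤ r * Po(r).real {m} := by
    rcases le_total r 1 with hr | hr
    · refine ⟨0, ?_⟩
      calc exp (-1) * min (r : ℝ) √r ≤ exp (-r) * r := by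
            gcongr
            · exact hr
            · exact min_le_left _ _
        _ = r * Po(r).real {0} := by simp [poissonMeasure_real_singleton, mul_comm]
    · refine ⟨⌊(r : ℝ)⌋₊, le_trans ?_ (exp_neg_one_mul_sqrt_le_mul_poissonMeasure_floor hr)⟩
      gcongr
      exact min_le_right _ _
  obtain ⟨m, hm⟩ := hbound
  linarith [two_mul_mul_poissonMeasure_singleton_le_integral_abs_sub r m]

lemma one_div_sqrt_two_le_two_mul_exp_neg_one : 1 / √2 ≤ 2 * exp (-1) := by
  have hsqrt : (1.4 : ℝ) ≤ √2 := le_sqrt_of_sq_le (by norm_num)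
  have hexp := exp_one_lt_d9
  rw [exp_neg, ← div_eq_mul_inv, div_le_div_iff₀ (by positivity) (by positivity)]
  linarith

end PoissonMeanAbsDeviation

section ScaledPoisson

lemma memLp_two_natCast_div_poissonMeasure (c : ℝ) (r : ℝ≥0) :
    MemLp (fun k : ℕ ↦ (k : ℝ) / c) 2 Po(r) :=
  (memLp_two_natCast_poissonMeasure r).mul_const c⁻¹

variable {t : ℝ≥0} (ht : t ≠ 0) (q : ℝ≥0)
include ht

lemma integral_natCast_div_poissonMeasure : ∫ k, (k : ℝ) / t ∂Po(t * q) = q := by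
  rw [integral_div, integral_natCast_poissonMeasure, NNReal.coe_mul,
    mul_div_cancel_left₀ _ (NNReal.coe_ne_zero.2 ht)]

lemma variance_natCast_div_poissonMeasure :
    Var[fun k : ℕ ↦ (k : ℝ) / t; Po(t * q)] = (t : ℝ)⁻¹ * q := by
  simp_rw [div_eq_mul_inv]
  rw [variance_mul_const, variance_natCast_poissonMeasure, NNReal.coe_mul]
  field_simp [NNReal.coe_ne_zero.2 ht]

lemma abs_poissonE_sub_eq_absBias (p : ℝ) :
    abs (poissonE (t * q) (fun k ↦ |(k : ℝ) / t - p|) - |(q : ℝ) - p|) =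
      absBias (fun k : ℕ ↦ (k : ℝ) / t) p Po(t * q) := by
  have hint := (memLp_two_natCast_div_poissonMeasure t (t * q)).integrable one_le_two
  rw [← abs_of_nonneg (absBias_nonneg hint p), absBias, integral_natCast_div_poissonMeasure ht,
    ← poissonE_eq_integral, NNReal.coe_mul]

theorem absBias_natCast_div_poissonMeasure_le {p : ℝ} (hp : 0 ≤ p) :
    absBias (fun k : ℕ ↦ (k : ℝ) / t) p Po(t * q) ≤ min (2 * min p q) (min √(p / t) √(q / t)) := by
  have h := absBias_le_min (memLp_two_natCast_div_poissonMeasure t (t * q))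
    (.of_forall fun k ↦ by positivity)
    (by rw [variance_natCast_div_poissonMeasure ht, integral_natCast_div_poissonMeasure ht])
    (inv_nonneg.2 t.coe_nonneg) hp
  simpa only [integral_natCast_div_poissonMeasure ht, inv_mul_eq_div] using h

theorem two_mul_exp_neg_one_mul_min_le_absBias_poissonMeasure (p : ℝ≥0) :
    2 * exp (-1) * min (p : ℝ) √(p / t) ≤ absBias (fun k : ℕ ↦ (k : ℝ) / t) p Po(t * p) := by
  have ht0 : (0 : ℝ) < t := by positivity
  have hsqrt : √(p / t) = √(t * p) / t := by
    rw [← mul_div_mul_left _ _ ht0.ne', sqrt_div' _ (by positivity), sqrt_mul_self ht0.le]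
  have hmin : min (p : ℝ) √(p / t) = min (t * p : ℝ) √(t * p) / t := by
    rw [← min_div_div_right ht0.le, mul_div_cancel_left₀ _ ht0.ne', hsqrt]
  have habs (k : ℕ) : |(k : ℝ) / t - p| = |(k : ℝ) - t * p| / t := by
    rw [← abs_of_pos ht0, ← abs_div, abs_of_pos ht0, sub_div, mul_div_cancel_left₀ _ ht0.ne']
  rw [absBias, integral_natCast_div_poissonMeasure ht, sub_self, abs_zero, sub_zero, hmin]
  simp_rw [habs]
  rw [integral_div, ← mul_div_assoc]
  gcongr
  exact_mod_cast two_mul_exp_neg_one_mul_min_le_integral_abs_sub_poissonMeasure (t * p)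

end ScaledPoisson

/-- bias bounds for `E |q̂ - p|` where `q̂ = X/n`, `X ~ Poisson(nq)`,
together with a matching lower bound on the supremum over the Poisson mean parameter `q ≥ 0`. -/
theorem poisson_abs_bias (n : ℕ) (hn : 0 < n) (p : ℝ) (hp : 0 ≤ p) :
    (∀ q : ℝ, 0 ≤ q →
      abs (poissonE (n * q) (fun k => |(k : ℝ) / n - p|) - |q - p|) ≤
        2 * min (min p q) (min (Real.sqrt (p / n)) (Real.sqrt (q / n)))) ∧
    (1 / Real.sqrt 2) * min p (Real.sqrt (p / n)) ≤
      ⨆ q : {q : ℝ // 0 ≤ q},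
        abs (poissonE (n * (q : ℝ)) (fun k => |(k : ℝ) / n - p|) - |(q : ℝ) - p|) := by
  have ht : (n : ℝ≥0) ≠ 0 := by exact_mod_cast hn.ne'
  have hbias (q : ℝ) (hq : 0 ≤ q) :
      abs (poissonE (n * q) (fun k ↦ |(k : ℝ) / n - p|) - |q - p|) =
        absBias (fun k : ℕ ↦ (k : ℝ) / (n : ℝ≥0)) p Po(n * ⟨q, hq⟩) :=
    abs_poissonE_sub_eq_absBias ht ⟨q, hq⟩ p
  have hupper (q : ℝ) (hq : 0 ≤ q) := absBias_natCast_div_poissonMeasure_le ht ⟨q, hq⟩ hp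
  refine ⟨fun q hq ↦ ?_, ?_⟩
  · rw [hbias q hq, mul_min_of_nonneg _ _ zero_le_two]
    refine (hupper q hq).trans (min_le_min_left _ ?_)
    exact le_mul_of_one_le_left (by positivity) one_le_two
  · simp_rw [fun q : {q : ℝ // 0 ≤ q} ↦ hbias q q.2]
    refine le_ciSup_of_le ⟨2 * p, ?_⟩ ⟨p, hp⟩ ?_
    · rintro _ ⟨q, rfl⟩
      exact (hupper q q.2).trans ((min_le_left _ _).trans (by gcongr; exact min_le_left _ _))
    · refine le_trans ?_ (two_mul_exp_neg_one_mul_min_le_absBias_poissonMeasure ht ⟨p, hp⟩)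
      exact mul_le_mul_of_nonneg_right one_div_sqrt_two_le_two_mul_exp_neg_one (by positivity)
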